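/- arXiv:1111.6257 — 2 statements merged into one kernel-verified Lean document; each statement's English description precedes it below -/
import Mathlib

section
/- Let H be a separable real Hilbert space and let I ⊆ ℝ be an interval that is closed and bounded on the left, with left endpoint t₀ ∈ I. Define Ψ(u, t) = (t − t₀)⁻¹ ∫_{t₀}^{t} (‖u(s)‖² − ‖u(t₀)‖²) ds for u ∈ C(I, H_w) and t ∈ I with t > t₀. Then Ψ is a Borel measurable function on the product space C(I, H_w) × (I ∖ {t₀}). -/
open scoped Classical

open MeasureTheory

/-!
For quasiconvex functions, strong and weak lower semicontinuity agree, so `x ↦ ‖x‖ ^ 2` is weakly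
lower semicontinuous. Since an interval `I` is locally compact, evaluation
`C(I, H_w) × I → H_w` is jointly continuous, and `(u, s) ↦ ‖u s‖ ^ 2` is therefore lower
semicontinuous. It is measurable for the *product* of the Borel σ-algebras because the factor `I`
is second countable, and the measurability of `Ψ` follows from Fubini's theorem.
-/

section Interval

variable {α : Type*} [TopologicalSpace α] [LinearOrder α] [OrderTopology α] {s : Set α}

theorem isLocallyClosed_of_isUpperSet (hs : IsUpperSet s) : IsLocallyClosed s := by
  by_cases hmin : ∃ a, IsLeast s a
  · obtain ⟨a, ha⟩ := hmin
    have hs_eq : s = Set.Ici a :=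
      Set.Subset.antisymm (fun _ hx => ha.2 hx) fun _ hx => hs hx ha.1
    exact hs_eq ▸ isClosed_Ici.isLocallyClosed
  · have exists_lt : ∀ x ∈ s, ∃ y ∈ s, y < x := by
      intro x hx
      by_contra! h
      exact hmin ⟨x, hx, h⟩
    refine (isOpen_iff_mem_nhds.2 fun x hx => ?_).isLocallyClosed
    obtain ⟨y, hy, hyx⟩ := exists_lt x hx
    exact Filter.mem_of_superset (Ioi_mem_nhds hyx) fun z hz => hs (le_of_lt hz) hy

theorem isLocallyClosed_of_ordConnected (hs : s.OrdConnected) : IsLocallyClosed s := by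
  rw [← hs.upperClosure_inter_lowerClosure]
  exact (isLocallyClosed_of_isUpperSet (upperClosure s).upper).inter
    (isLocallyClosed_of_isUpperSet (α := αᵒᵈ) (lowerClosure s).lower.toDual)

end Interval

section WeakTopology

theorem lowerSemicontinuous_toWeakSpace_symm_of_quasiconvexOn {𝕜 E : Type*} [RCLike 𝕜]
    [AddCommGroup E] [Module 𝕜 E] [Module ℝ E] [IsScalarTower ℝ 𝕜 E] [TopologicalSpace E]
    [IsTopologicalAddGroup E] [ContinuousSMul 𝕜 E] [LocallyConvexSpace ℝ E]
    {γ : Type*} [LinearOrder γ] {φ : E → γ} (hconv : QuasiconvexOn ℝ Set.univ φ)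
    (hlsc : LowerSemicontinuous φ) :
    LowerSemicontinuous fun x : WeakSpace 𝕜 E => φ ((toWeakSpace 𝕜 E).symm x) := by
  refine lowerSemicontinuous_iff_isClosed_preimage.2 fun c => ?_
  have convex_sublevel : Convex ℝ (φ ⁻¹' Set.Iic c) := by
    simpa only [Set.mem_univ, true_and] using! hconv c
  have closed_image : IsClosed (toWeakSpace 𝕜 E '' (φ ⁻¹' Set.Iic c)) := by
    rw [← closure_eq_iff_isClosed, ← convex_sublevel.toWeakSpace_closure 𝕜,
      (hlsc.isClosed_preimage c).closure_eq]
  rwa [LinearEquiv.image_eq_preimage_symm] at closed_image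

theorem lowerSemicontinuous_norm_sq_toWeakSpace_symm {E : Type*} [SeminormedAddCommGroup E]
    [NormedSpace ℝ E] :
    LowerSemicontinuous fun x : WeakSpace ℝ E => ‖(toWeakSpace ℝ E).symm x‖ ^ 2 :=
  lowerSemicontinuous_toWeakSpace_symm_of_quasiconvexOn
    (convexOn_univ_norm.pow (fun _ _ => norm_nonneg _) 2).quasiconvexOn
    (continuous_norm.pow 2).lowerSemicontinuous

end WeakTopology

section Measurability

theorem measurable_eval_of_lowerSemicontinuous {T Y : Type*} [TopologicalSpace T]
    [SecondCountableTopology T] [MeasurableSpace T] [OpensMeasurableSpace T]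
    [TopologicalSpace Y] [LocallyCompactPair T Y] [MeasurableSpace C(T, Y)]
    [OpensMeasurableSpace C(T, Y)] {γ : Type*} [TopologicalSpace γ] [LinearOrder γ]
    [OrderTopology γ] [SecondCountableTopology γ] [MeasurableSpace γ] [BorelSpace γ]
    {φ : Y → γ} (hφ : LowerSemicontinuous φ) :
    Measurable fun p : C(T, Y) × T => φ (p.1 p.2) :=
  (hφ.comp continuous_eval).measurable

variable {α : Type*} [MeasurableSpace α]

theorem measurable_dite_snd_mem {β γ : Type*} [MeasurableSpace β] [MeasurableSpace γ] {s : Set β}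
    (hs : MeasurableSet s) {f : α × s → γ} (hf : Measurable f) (c : γ) :
    Measurable fun q : α × β => if h : q.2 ∈ s then f (q.1, ⟨q.2, h⟩) else c :=
  Measurable.dite (s := Prod.snd ⁻¹' s) (f := fun q => f (q.1.1, ⟨q.1.2, q.2⟩)) (g := fun _ => c)
    (hf.comp (by fun_prop)) measurable_const (measurable_snd hs)

theorem stronglyMeasurable_intervalIntegral {E : Type*} [NormedAddCommGroup E] [NormedSpace ℝ E]
    {μ : Measure ℝ} [SFinite μ] {f : α × ℝ → E} (hf : StronglyMeasurable f) {a b : α → ℝ}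
    (ha : Measurable a) (hb : Measurable b) :
    StronglyMeasurable fun x => ∫ s in a x..b x, f (x, s) ∂μ := by
  have setIntegral_Ioc : ∀ {a b : α → ℝ}, Measurable a → Measurable b →
      StronglyMeasurable fun x => ∫ s in Set.Ioc (a x) (b x), f (x, s) ∂μ := by
    intro a b ha hb
    have hmeas : MeasurableSet {q : α × ℝ | q.2 ∈ Set.Ioc (a q.1) (b q.1)} :=
      (measurableSet_lt (ha.comp measurable_fst) measurable_snd).inter
        (measurableSet_le measurable_snd (hb.comp measurable_fst))
    simp_rw [← integral_indicator measurableSet_Ioc]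
    exact (hf.indicator hmeas).integral_prod_right'
  exact (setIntegral_Ioc ha hb).sub (setIntegral_Ioc hb ha)

end Measurability

theorem psi_measurable_general {E : Type*} [SeminormedAddCommGroup E] [NormedSpace ℝ E]
    (I : Set ℝ) (hI : I.OrdConnected) (t₀ : ℝ) (ht₀ : t₀ ∈ I)
    [MeasurableSpace C(I, WeakSpace ℝ E)] [OpensMeasurableSpace C(I, WeakSpace ℝ E)] :
    Measurable (fun p : C(I, WeakSpace ℝ E) × ↥(I \ {t₀}) =>
      (p.2.1 - t₀)⁻¹ *
        ∫ s in t₀..p.2.1,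
          (if h : s ∈ I then
              ‖(toWeakSpace ℝ E).symm (p.1 ⟨s, h⟩)‖ ^ 2 -
                ‖(toWeakSpace ℝ E).symm (p.1 ⟨t₀, ht₀⟩)‖ ^ 2
            else 0)) := by
  have : LocallyCompactSpace I := (isLocallyClosed_of_ordConnected hI).locallyCompactSpace
  have norm_sq_eval : Measurable fun p : C(I, WeakSpace ℝ E) × I =>
      ‖(toWeakSpace ℝ E).symm (p.1 p.2)‖ ^ 2 :=
    measurable_eval_of_lowerSemicontinuous lowerSemicontinuous_norm_sq_toWeakSpace_symm
  have increment : Measurable fun q : (C(I, WeakSpace ℝ E) × ↥(I \ {t₀})) × I =>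
      ‖(toWeakSpace ℝ E).symm (q.1.1 q.2)‖ ^ 2 -
        ‖(toWeakSpace ℝ E).symm (q.1.1 ⟨t₀, ht₀⟩)‖ ^ 2 :=
    (norm_sq_eval.comp (measurable_fst.fst.prodMk measurable_snd)).sub
      (norm_sq_eval.comp (measurable_fst.fst.prodMk measurable_const))
  have integrand := measurable_dite_snd_mem hI.measurableSet increment 0
  have endpoint : Measurable fun p : C(I, WeakSpace ℝ E) × ↥(I \ {t₀}) => p.2.1 := by fun_prop
  exact (endpoint.sub_const t₀).inv.mul
    (stronglyMeasurable_intervalIntegral integrand.stronglyMeasurable measurable_const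
      endpoint).measurable

/-- Let `H` be a separable real Hilbert space and `I ⊆ ℝ` an interval which
is closed and bounded on the left, with left endpoint `t₀ ∈ I`.  The function
`Ψ(u, t) = (t - t₀)⁻¹ ∫_{t₀}^{t} (‖u s‖² - ‖u t₀‖²) ds` is Borel measurable on
`C(I, H_w) × (I \ {t₀})`. -/
theorem psi_measurable
    {H : Type*} [NormedAddCommGroup H] [InnerProductSpace ℝ H] [CompleteSpace H]
    [TopologicalSpace.SeparableSpace H]
    (I : Set ℝ) (hI : I.OrdConnected)
    (t₀ : ℝ) (ht₀ : t₀ ∈ I) (hleft : ∀ t ∈ I, t₀ ≤ t)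
    [MeasurableSpace C(I, WeakSpace ℝ H)] [BorelSpace C(I, WeakSpace ℝ H)] :
    Measurable (fun p : C(I, WeakSpace ℝ H) × ↥(I \ {t₀}) =>
      (p.2.1 - t₀)⁻¹ *
        ∫ s in t₀..p.2.1,
          (if h : s ∈ I then
              ‖(toWeakSpace ℝ H).symm (p.1 ⟨s, h⟩)‖ ^ 2 -
                ‖(toWeakSpace ℝ H).symm (p.1 ⟨t₀, ht₀⟩)‖ ^ 2
            else 0)) := by
  exact psi_measurable_general I hI t₀ ht₀
end

section
/- Let H be a separable real Hilbert space and let I ⊆ ℝ be an interval that is closed and bounded on the left, with left endpoint t₀ ∈ I. Then the function u ↦ liminf_{t → t₀⁺} (t − t₀)⁻¹ ∫_{t₀}^{t} (‖u(s)‖² − ‖u(t₀)‖²) ds is Borel measurable on C(I, H_w). -/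
open scoped Classical
open MeasureTheory Filter

/-!
The norm of `E` is weakly lower semicontinuous, so `(u, s) ↦ ‖u s‖ ^ n` is jointly lower
semicontinuous on `C(K, E_w) × K` for every compact `K`, and it is bounded in `s` by the uniform
boundedness principle. By Vitali–Carathéodory a lower semicontinuous integrand is approximated from
strictly below by upper semicontinuous ones, and compactness of `K` carries the strict inequality
over to nearby paths; hence `u ↦ ∫ ‖u s‖ ^ n` is itself lower semicontinuous. So each average over
`[t₀, t]` is a Borel function of the path, and, as the averages are continuous in `t`, their lower
limit may be taken along a countable dense set of times.
-/

open Set Topology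

theorem lowerSemicontinuous_integral_of_uncurry {X K : Type*} [TopologicalSpace X]
    [TopologicalSpace K] [CompactSpace K] [MeasurableSpace K] [BorelSpace K]
    {μ : Measure K} [SigmaFinite μ] [μ.WeaklyRegular] {f : X → K → ℝ}
    (hf : LowerSemicontinuous (Function.uncurry f)) (hint : ∀ x, Integrable (f x) μ) :
    LowerSemicontinuous fun x => ∫ s, f x s ∂μ := by
  intro x₀ c hc
  obtain ⟨g, hgf, hg, hgint, hgbot, hcg⟩ :=
    exists_upperSemicontinuous_lt_integral_gt (f x₀) (hint x₀) (sub_pos.2 hc)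
  have hnear : ∀ᶠ x in 𝓝 x₀, ∀ s ∈ univ, g s < f x s := by
    refine isCompact_univ.eventually_forall_of_forall_eventually fun s _ => ?_
    obtain ⟨r, hgr, hrf⟩ := EReal.lt_iff_exists_real_btwn.1 (hgf s)
    filter_upwards [continuousAt_snd.eventually (hg s r hgr),
      hf (x₀, s) r (EReal.coe_lt_coe_iff.1 hrf)] with p hp hp'
    exact hp.trans (EReal.coe_lt_coe_iff.2 hp')
  filter_upwards [hnear] with x hx
  calc
    c < ∫ s, (g s).toReal ∂μ := by linarith
    _ ≤ ∫ s, f x s ∂μ := integral_mono_ae hgint (hint x) <| hgbot.mono fun s hs =>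
      EReal.toReal_le_toReal (hx s (mem_univ s)).le hs.ne' (EReal.coe_ne_top _)

section WeakSpace

variable {𝕜 E : Type*} [RCLike 𝕜] [SeminormedAddCommGroup E] [NormedSpace 𝕜 E]

theorem continuous_strongDual_weakSpace (φ : StrongDual 𝕜 E) :
    Continuous fun x : WeakSpace 𝕜 E => φ ((toWeakSpace 𝕜 E).symm x) :=
  WeakBilin.eval_continuous (topDualPairing 𝕜 E).flip φ

theorem lowerSemicontinuous_norm_pow_weakSpace (n : ℕ) :
    LowerSemicontinuous fun x : WeakSpace 𝕜 E => ‖(toWeakSpace 𝕜 E).symm x‖ ^ n := by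
  intro x c hc
  obtain ⟨φ, hφ, hφx⟩ := exists_dual_vector'' 𝕜 ((toWeakSpace 𝕜 E).symm x)
  have hcφ : c < ‖φ ((toWeakSpace 𝕜 E).symm x)‖ ^ n := by simpa [hφx] using hc
  filter_upwards [((continuous_strongDual_weakSpace φ).norm.pow n).continuousAt.eventually_const_lt
    hcφ] with y hy
  have hφy : ‖φ ((toWeakSpace 𝕜 E).symm y)‖ ≤ ‖(toWeakSpace 𝕜 E).symm y‖ := by
    simpa only [one_mul] using φ.le_of_opNorm_le hφ ((toWeakSpace 𝕜 E).symm y)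
  exact hy.trans_le (pow_le_pow_left₀ (norm_nonneg _) hφy n)

theorem exists_norm_le_of_isCompact_weakSpace {S : Set (WeakSpace 𝕜 E)} (hS : IsCompact S) :
    ∃ C, ∀ x ∈ S, ‖(toWeakSpace 𝕜 E).symm x‖ ≤ C := by
  have hpointwise : ∀ φ : StrongDual 𝕜 E, ∃ C, ∀ x : S,
      ‖NormedSpace.inclusionInDoubleDual 𝕜 E ((toWeakSpace 𝕜 E).symm x) φ‖ ≤ C := fun φ =>
    let ⟨C, hC⟩ := hS.exists_bound_of_continuousOn (continuous_strongDual_weakSpace φ).continuousOn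
    ⟨C, fun x => hC x x.2⟩
  obtain ⟨C, hC⟩ := banach_steinhaus hpointwise
  exact ⟨C, fun x hx =>
    ((NormedSpace.inclusionInDoubleDualLi 𝕜).norm_map _).symm.trans_le (hC ⟨x, hx⟩)⟩

end WeakSpace

section CompactPath

variable {𝕜 E K : Type*} [RCLike 𝕜] [SeminormedAddCommGroup E] [NormedSpace 𝕜 E]
  [TopologicalSpace K] [CompactSpace K] [MeasurableSpace K]
  {μ : Measure K} [IsFiniteMeasure μ]

theorem integrable_norm_pow_weakSpace [OpensMeasurableSpace K] (u : C(K, WeakSpace 𝕜 E)) (n : ℕ) :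
    Integrable (fun s => ‖(toWeakSpace 𝕜 E).symm (u s)‖ ^ n) μ := by
  obtain ⟨C, hC⟩ := exists_norm_le_of_isCompact_weakSpace (isCompact_range u.continuous)
  have hmeas : Measurable fun s => ‖(toWeakSpace 𝕜 E).symm (u s)‖ ^ n :=
    ((lowerSemicontinuous_norm_pow_weakSpace n).comp u.continuous).measurable
  refine .of_bound hmeas.aestronglyMeasurable (C ^ n) (.of_forall fun s => ?_)
  rw [norm_pow, norm_norm]
  exact pow_le_pow_left₀ (norm_nonneg _) (hC _ (mem_range_self s)) n

variable [BorelSpace K] [μ.WeaklyRegular]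

theorem lowerSemicontinuous_integral_norm_pow_weakSpace (n : ℕ) :
    LowerSemicontinuous fun u : C(K, WeakSpace 𝕜 E) =>
      ∫ s, ‖(toWeakSpace 𝕜 E).symm (u s)‖ ^ n ∂μ :=
  lowerSemicontinuous_integral_of_uncurry
    ((lowerSemicontinuous_norm_pow_weakSpace n).comp ContinuousEval.continuous_eval)
    fun u => integrable_norm_pow_weakSpace u n

end CompactPath

theorem isFiniteMeasure_comap_of_isCompact {α : Type*} [TopologicalSpace α] [T2Space α]
    [MeasurableSpace α] [OpensMeasurableSpace α] {μ : Measure α} [IsFiniteMeasureOnCompacts μ]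
    {s : Set α} (hs : IsCompact s) :
    IsFiniteMeasure (μ.comap ((↑) : s → α)) := by
  have : CompactSpace s := isCompact_iff_compactSpace.1 hs
  have := IsFiniteMeasureOnCompacts.comap' μ continuous_subtype_val
    (MeasurableEmbedding.subtype_coe hs.measurableSet)
  infer_instance

section Increment

variable {𝕜 E T : Type*} [RCLike 𝕜] [SeminormedAddCommGroup E] [NormedSpace 𝕜 E]
  [TopologicalSpace T] {I K : Set T}

/-- The increment `‖u s‖ ^ n - ‖u t₀‖ ^ n` along a weakly continuous path `u` on `I`, extended by
zero to times `s ∉ I` so that it can be integrated over the ambient space. -/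
noncomputable def normPowIncrement (u : C(I, WeakSpace 𝕜 E)) (t₀ : I) (n : ℕ) (s : T) : ℝ :=
  if h : s ∈ I then
    ‖(toWeakSpace 𝕜 E).symm (u ⟨s, h⟩)‖ ^ n - ‖(toWeakSpace 𝕜 E).symm (u t₀)‖ ^ n
  else 0

theorem normPowIncrement_comp_coe (hKI : K ⊆ I) (u : C(I, WeakSpace 𝕜 E)) (t₀ : I) (n : ℕ) :
    normPowIncrement u t₀ n ∘ ((↑) : K → T) = fun s =>
      ‖(toWeakSpace 𝕜 E).symm (u.comp ⟨_, continuous_inclusion hKI⟩ s)‖ ^ n -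
        ‖(toWeakSpace 𝕜 E).symm (u t₀)‖ ^ n :=
  funext fun s => dif_pos (hKI s.2)

variable [MeasurableSpace T] [BorelSpace T] {μ : Measure T} [IsFiniteMeasureOnCompacts μ]

theorem integrableOn_normPowIncrement [T2Space T] (hK : IsCompact K) (hKI : K ⊆ I)
    (u : C(I, WeakSpace 𝕜 E)) (t₀ : I) (n : ℕ) : IntegrableOn (normPowIncrement u t₀ n) K μ := by
  have : CompactSpace K := isCompact_iff_compactSpace.1 hK
  have : IsFiniteMeasure (μ.comap ((↑) : K → T)) := isFiniteMeasure_comap_of_isCompact hK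
  rw [integrableOn_iff_comap_subtypeVal hK.measurableSet, normPowIncrement_comp_coe hKI]
  exact (integrable_norm_pow_weakSpace _ n).sub (integrable_const _)

theorem measurable_setIntegral_normPowIncrement [TopologicalSpace.MetrizableSpace T]
    [MeasurableSpace C(I, WeakSpace 𝕜 E)] [OpensMeasurableSpace C(I, WeakSpace 𝕜 E)]
    (hK : IsCompact K) (hKI : K ⊆ I) (t₀ : I) (n : ℕ) :
    Measurable fun u : C(I, WeakSpace 𝕜 E) => ∫ s in K, normPowIncrement u t₀ n s ∂μ := by
  have : CompactSpace K := isCompact_iff_compactSpace.1 hK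
  have : IsFiniteMeasure (μ.comap ((↑) : K → T)) := isFiniteMeasure_comap_of_isCompact hK
  have hintegral (u : C(I, WeakSpace 𝕜 E)) : ∫ s in K, normPowIncrement u t₀ n s ∂μ =
      ∫ s, ‖(toWeakSpace 𝕜 E).symm (u.comp ⟨_, continuous_inclusion hKI⟩ s)‖ ^ n ∂μ.comap (↑) -
        ∫ _ : K, ‖(toWeakSpace 𝕜 E).symm (u t₀)‖ ^ n ∂μ.comap (↑) := by
    rw [← integral_subtype_comap hK.measurableSet,
      ← integral_sub (integrable_norm_pow_weakSpace _ n) (integrable_const _)]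
    exact congrArg (integral _) (normPowIncrement_comp_coe hKI u t₀ n)
  simp only [hintegral, integral_const, smul_eq_mul]
  refine Measurable.sub ?_ (Measurable.const_mul ?_ _)
  · exact ((lowerSemicontinuous_integral_norm_pow_weakSpace n).comp
      (ContinuousMap.continuous_precomp _)).measurable
  · exact ((lowerSemicontinuous_norm_pow_weakSpace n).comp (continuous_eval_const t₀)).measurable

end Increment

section Liminf

variable {X α : Type*} [TopologicalSpace X] [ConditionallyCompleteLinearOrder α]
  [TopologicalSpace α]

theorem liminf_nhdsWithin_eq_of_subset_closure [OrderClosedTopology α] {f : X → α} {s d : Set X}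
    (hds : d ⊆ s) (hsd : s ⊆ closure d) (hf : ContinuousOn f s) (a : X) :
    liminf f (𝓝[s] a) = liminf f (𝓝[d] a) := by
  rw [liminf_eq, liminf_eq]
  congr 1 with c
  refine ⟨fun h => h.filter_mono (nhdsWithin_mono a hds), fun h => ?_⟩
  obtain ⟨U, hU, haU, hUd⟩ := mem_nhdsWithin.1 h
  refine mem_nhdsWithin.2 ⟨U, hU, haU, fun x ⟨hxU, hxs⟩ => ?_⟩
  have hx : x ∈ closure (U ∩ d) := hU.inter_closure ⟨hxU, hsd hxs⟩
  exact continuousWithinAt_const.closure_le hx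
    ((hf x hxs).mono (inter_subset_right.trans hds)) hUd

theorem measurable_liminf_nhdsWithin {Ω : Type*} [MeasurableSpace Ω]
    [TopologicalSpace.PseudoMetrizableSpace X] [SecondCountableTopology X]
    [OrderTopology α] [SecondCountableTopology α] [MeasurableSpace α] [BorelSpace α]
    {F : Ω → X → α} {s : Set X} (hmeas : ∀ x ∈ s, Measurable fun ω => F ω x)
    (hcont : ∀ ω, ContinuousOn (F ω) s) (a : X) :
    Measurable fun ω => liminf (F ω) (𝓝[s] a) := by
  obtain ⟨d, hds, hd, hsd⟩ :=
    (TopologicalSpace.IsSeparable.of_separableSpace s).exists_countable_dense_subset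
  have : Countable d := hd
  obtain ⟨B, hB⟩ := (comap ((↑) : d → X) (𝓝 a)).exists_antitone_basis
  have hliminf (ω : Ω) : liminf (F ω) (𝓝[s] a) =
      liminf (fun x : d => F ω x) (comap (↑) (𝓝 a)) := by
    rw [liminf_nhdsWithin_eq_of_subset_closure hds hsd (hcont ω), nhdsWithin,
      ← map_comap_setCoe_val]
    rfl
  simp only [hliminf]
  exact .liminf' (fun x => hmeas x (hds x.2)) ⟨hB.toHasBasis, to_countable _⟩
    fun _ => to_countable _

end Liminf

theorem continuousOn_inv_mul_primitive {f : ℝ → ℝ} {a b : ℝ} (hf : IntegrableOn f (Icc a b)) :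
    ContinuousOn (fun t => (t - a)⁻¹ * ∫ s in a..t, f s) (Ioc a b) := by
  intro t ht
  have hab : a ≤ b := ht.1.le.trans ht.2
  have hprim : ContinuousOn (fun t => ∫ s in a..t, f s) (Icc a b) := by
    rw [← uIcc_of_le hab] at hf ⊢
    exact intervalIntegral.continuousOn_primitive_interval hf
  have hinv : ContinuousWithinAt (fun t => (t - a)⁻¹) (Ioc a b) t :=
    (continuousWithinAt_id.sub continuousWithinAt_const).inv₀ (sub_pos.2 ht.1).ne'
  exact hinv.mul ((hprim.mono Ioc_subset_Icc_self) t ht)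

theorem psi_liminf_measurable_general
    {𝕜 E : Type*} [RCLike 𝕜] [SeminormedAddCommGroup E] [NormedSpace 𝕜 E]
    {I : Set ℝ} (hI : I.OrdConnected) (t₀ : I) (n : ℕ)
    [MeasurableSpace C(I, WeakSpace 𝕜 E)] [OpensMeasurableSpace C(I, WeakSpace 𝕜 E)] :
    Measurable fun u : C(I, WeakSpace 𝕜 E) =>
      liminf (fun t : ℝ => (t - t₀)⁻¹ * ∫ s in t₀..t, normPowIncrement u t₀ n s)
        (𝓝[I ∩ Ioi ↑t₀] ↑t₀) := by
  rcases (I ∩ Ioi (t₀ : ℝ)).eq_empty_or_nonempty with hempty | ⟨b, hbI, hb : t₀ < b⟩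
  · simp only [hempty, nhdsWithin_empty, liminf_eq, eventually_bot, measurable_const]
  have hsub : Icc ↑t₀ b ⊆ I := hI.out t₀.2 hbI
  have hfilter : 𝓝[I ∩ Ioi ↑t₀] (t₀ : ℝ) = 𝓝[Ioc ↑t₀ b] ↑t₀ := by
    refine le_antisymm ?_ (nhdsWithin_mono _ fun t ht => ⟨hsub (Ioc_subset_Icc_self ht), ht.1⟩)
    rw [nhdsWithin_Ioc_eq_nhdsGT hb]
    exact nhdsWithin_mono _ inter_subset_right
  rw [hfilter]
  refine measurable_liminf_nhdsWithin (fun t ht => Measurable.const_mul ?_ _)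
    (fun u => continuousOn_inv_mul_primitive
      (integrableOn_normPowIncrement isCompact_Icc hsub u t₀ n)) t₀
  simp only [intervalIntegral.integral_of_le ht.1.le, ← integral_Icc_eq_integral_Ioc]
  exact measurable_setIntegral_normPowIncrement isCompact_Icc
    ((Icc_subset_Icc_right ht.2).trans hsub) t₀ n

/-- Let `H` be a separable real Hilbert space and `I ⊆ ℝ` an interval which
is closed and bounded on the left, with left endpoint `t₀ ∈ I`.  Then the function
`u ↦ liminf_{t → t₀⁺} (t - t₀)⁻¹ ∫_{t₀}^{t} (‖u s‖² - ‖u t₀‖²) ds` is Borel measurable on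
`C(I, H_w)`. -/
theorem psi_liminf_measurable
    {H : Type*} [NormedAddCommGroup H] [InnerProductSpace ℝ H] [CompleteSpace H]
    [TopologicalSpace.SeparableSpace H]
    (I : Set ℝ) (hI : I.OrdConnected)
    (t₀ : ℝ) (ht₀ : t₀ ∈ I) (hleft : ∀ t ∈ I, t₀ ≤ t)
    [MeasurableSpace C(I, WeakSpace ℝ H)] [BorelSpace C(I, WeakSpace ℝ H)] :
    Measurable (fun u : C(I, WeakSpace ℝ H) =>
      Filter.liminf (fun t : ℝ =>
          (t - t₀)⁻¹ *
            ∫ s in t₀..t,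
              (if h : s ∈ I then
                  ‖(toWeakSpace ℝ H).symm (u ⟨s, h⟩)‖ ^ 2 -
                    ‖(toWeakSpace ℝ H).symm (u ⟨t₀, ht₀⟩)‖ ^ 2
                else 0))
          (nhdsWithin t₀ (I ∩ Set.Ioi t₀))) :=
  psi_liminf_measurable_general hI ⟨t₀, ht₀⟩ 2
end
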